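/- Let x be a binary string of length n containing at least one block of zeros of length 5 and at least one block of zeros of length 1, and let x' be the binary string of length n obtained from x by deleting one zero from some block of zeros of length 5 and inserting one extra zero into some block of zeros of length 1. Then for every binary string y of length n, the optimal alignment scores satisfy |L(x', y) − L(x, y)| ≤ 1. -/

import Mathlib

/-! Deleting position `p` from `x`, and deleting the inserted position from `x'`, leaves the same
string `z` of length `n - 1`, and both deleted letters are zeros. An alignment of `x` with `y`
uses the deleted zero in at most one pair, which contributes at most `1`; dropping that pair gives
an alignment of `z`, hence of `x'`, with `y`. So `L(x, y) ≤ L(x', y) + 1`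
(`optScore_le_add_one`), and the reverse bound follows by exchanging `x` and `x'`. -/

open scoped Classical
open Finset

noncomputable section

/-- Score of aligning two letters (`true` = 1, `false` = 0):
`s(1,1) = S`, `s(0,0) = 1`, `s(1,0) = s(0,1) = 0`. -/
def letterScore (S : ℝ) (a b : Bool) : ℝ :=
  if a = true ∧ b = true then S else if a = false ∧ b = false then 1 else 0

/-- Score of the alignment `(π, ν)` of the strings `x` and `y`. -/
def alignScore (S : ℝ) {n k : ℕ} (x y : Fin n → Bool) (π ν : Fin k → Fin n) : ℝ :=
  ∑ i : Fin k, letterScore S (x (π i)) (y (ν i))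

/-- The optimal alignment score of two binary strings of length `n`. -/
def optScore (S : ℝ) (n : ℕ) (x y : Fin n → Bool) : ℝ :=
  sSup {r : ℝ | ∃ (k : ℕ) (π ν : Fin k → Fin n),
    StrictMono π ∧ StrictMono ν ∧ r = alignScore S x y π ν}

/-- The string `x`, extended by the (neutral) letter `true` outside `[0, n)`. -/
def ext {n : ℕ} (x : Fin n → Bool) : ℕ → Bool :=
  fun j => if h : j < n then x ⟨j, h⟩ else true

/-- `blockStart x ℓ i` holds iff a block of zeros of length `ℓ` of `x` starts at position `i`:
positions `i, …, i+ℓ-1` carry zeros, and they are delimited by ones (or the ends of `x`). -/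
def blockStart {n : ℕ} (x : Fin n → Bool) (ℓ i : ℕ) : Prop :=
  0 < ℓ ∧ i + ℓ ≤ n ∧ (∀ j ∈ Finset.Ico i (i + ℓ), ext x j = false) ∧
    (i = 0 ∨ ext x (i - 1) = true) ∧ ext x (i + ℓ) = true

/-- The set of starting positions of blocks of zeros of length `ℓ` in `x`. -/
def starts {n : ℕ} (x : Fin n → Bool) (ℓ : ℕ) : Finset ℕ :=
  (Finset.range n).filter fun i => blockStart x ℓ i

/-- The number of blocks of zeros of length `ℓ` in `x`. -/
def numBlocks {n : ℕ} (x : Fin n → Bool) (ℓ : ℕ) : ℕ := (starts x ℓ).card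

/-- Probability of an event under a uniform random binary string of length `n`. -/
def probX (n : ℕ) (E : (Fin n → Bool) → Prop) : ℝ :=
  ((Finset.univ.filter E).card : ℝ) / 2 ^ n

/-- Probability of an event under two independent uniform random binary strings of length `n`. -/
def probXY (n : ℕ) (E : (Fin n → Bool) → (Fin n → Bool) → Prop) : ℝ :=
  ((Finset.univ.filter (fun p : (Fin n → Bool) × (Fin n → Bool) => E p.1 p.2)).card : ℝ) / 4 ^ n

/-- Expectation of a function of a uniform random binary string of length `n`. -/
def expX (n : ℕ) (f : (Fin n → Bool) → ℝ) : ℝ := (∑ x, f x) / 2 ^ n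

/-- Expectation of a function of two independent uniform random binary strings of length `n`. -/
def expXY (n : ℕ) (f : (Fin n → Bool) → (Fin n → Bool) → ℝ) : ℝ := (∑ x, ∑ y, f x y) / 4 ^ n

/-- The string obtained from `x` by removing one zero from the block of zeros starting at `p`
and inserting one extra zero into the block of zeros starting at `q`. -/
def modifyStr {n : ℕ} (x : Fin n → Bool) (p q : ℕ) : Fin n → Bool :=
  fun i => (((List.ofFn x).eraseIdx p).insertIdx (if p < q then q - 1 else q) false).getD i false

theorem letterScore_le {S : ℝ} (hS : 0 < S) (a b : Bool) : letterScore S a b ≤ S + 1 := by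
  unfold letterScore; split_ifs <;> linarith

theorem letterScore_false_le (S : ℝ) (b : Bool) : letterScore S false b ≤ 1 := by
  cases b <;> simp [letterScore]

theorem alignScore_le_optScore {S : ℝ} (hS : 0 < S) {n k : ℕ} (x y : Fin n → Bool)
    {π ν : Fin k → Fin n} (hπ : StrictMono π) (hν : StrictMono ν) :
    alignScore S x y π ν ≤ optScore S n x y := by
  refine le_csSup ⟨n * (S + 1), ?_⟩ ⟨k, π, ν, hπ, hν, rfl⟩
  rintro r ⟨k, π, ν, hπ, -, rfl⟩
  have hk : k ≤ n := by simpa using Fintype.card_le_of_injective π hπ.injective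
  calc alignScore S x y π ν ≤ ∑ _i : Fin k, (S + 1) :=
        Finset.sum_le_sum fun i _ => letterScore_le hS _ _
    _ = k * (S + 1) := by rw [Finset.sum_const]; simp only [card_univ, Fintype.card_fin, nsmul_eq_mul]
    _ ≤ n * (S + 1) := by gcongr

/-- An alignment of `x` that avoids position `a` transfers to `x'` with the same score, when `x`
without `a` and `x'` without `b` are the same string. -/
theorem alignScore_le_optScore_of_avoid {S : ℝ} (hS : 0 < S) {m k : ℕ}
    {x x' : Fin (m + 1) → Bool} (y : Fin (m + 1) → Bool) {a b : Fin (m + 1)}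
    (h : ∀ j, x (a.succAbove j) = x' (b.succAbove j))
    {π ν : Fin k → Fin (m + 1)} (hπ : StrictMono π) (hν : StrictMono ν) (ha : ∀ i, π i ≠ a) :
    alignScore S x y π ν ≤ optScore S (m + 1) x' y := by
  choose σ hσ using fun i => Fin.exists_succAbove_eq (ha i)
  have hσm : StrictMono σ := fun i j hij => by
    have := hπ hij
    rw [← hσ i, ← hσ j] at this
    exact (Fin.strictMono_succAbove a).lt_iff_lt.1 this
  have he : alignScore S x y π ν = alignScore S x' y (fun i => b.succAbove (σ i)) ν :=
    Finset.sum_congr rfl fun i _ => by rw [← hσ i, h]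
  rw [he]
  exact alignScore_le_optScore hS x' y ((Fin.strictMono_succAbove b).comp hσm) hν

/-- If deleting a zero at `a` from `x` gives the same string as deleting the letter at `b` from
`x'`, then the score of `x` exceeds that of `x'` by at most `1`. -/
theorem optScore_le_add_one {S : ℝ} (hS : 0 < S) {m : ℕ}
    {x x' : Fin (m + 1) → Bool} (y : Fin (m + 1) → Bool) {a b : Fin (m + 1)}
    (h : ∀ j, x (a.succAbove j) = x' (b.succAbove j)) (hxa : x a = false) :
    optScore S (m + 1) x y ≤ optScore S (m + 1) x' y + 1 := by
  refine csSup_le ⟨_, 0, Fin.elim0, Fin.elim0, fun i => i.elim0, fun i => i.elim0, rfl⟩ ?_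
  rintro r ⟨k, π, ν, hπ, hν, rfl⟩
  by_cases ha : ∀ i, π i ≠ a
  · linarith [alignScore_le_optScore_of_avoid hS y h hπ hν ha]
  push Not at ha
  obtain ⟨i, hi⟩ := ha
  cases k with
  | zero => exact i.elim0
  | succ k =>
    have h1 := alignScore_le_optScore_of_avoid hS y h
      (hπ.comp (Fin.strictMono_succAbove i)) (hν.comp (Fin.strictMono_succAbove i))
      (fun j hj => Fin.succAbove_ne i j (hπ.injective (hj.trans hi.symm)))
    have h2 : alignScore S x y π ν = letterScore S (x (π i)) (y (ν i)) +
        alignScore S x y (π ∘ i.succAbove) (ν ∘ i.succAbove) :=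
      Fin.sum_univ_succAbove _ i
    have h3 := letterScore_false_le S (y (ν i))
    rw [hi, hxa] at h2
    linarith

/-- The zero inserted by `modifyStr x a q` sits at `b` (erasing position `a` first shifts the later
positions down by one), and without it the string is `x` with position `a` deleted. -/
theorem modifyStr_spec {m : ℕ} (x : Fin (m + 1) → Bool) (a : Fin (m + 1)) (q : ℕ)
    (b : Fin (m + 1)) (hb : (b : ℕ) = if (a : ℕ) < q then q - 1 else q) :
    modifyStr x a q b = false ∧
      ∀ j, x (a.succAbove j) = modifyStr x a q (b.succAbove j) := by
  have hlen : ((List.ofFn x).eraseIdx a).length = m := by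
    rw [List.length_eraseIdx_of_lt (by rw [List.length_ofFn]; exact a.2)]; simp
  have hlen' : (((List.ofFn x).eraseIdx a).insertIdx b false).length = m + 1 := by
    rw [List.length_insertIdx_of_le_length (by omega), hlen]
  unfold modifyStr
  rw [← hb]
  constructor
  · rw [List.getD_eq_getElem _ _ (by omega), List.getElem_insertIdx_self]
  · intro j
    rw [List.getD_eq_getElem _ _ (by omega), List.getElem_insertIdx]
    simp only [List.getElem_eraseIdx, List.getElem_ofFn]
    simp only [Fin.succAbove, Fin.lt_def, Fin.val_castSucc]
    by_cases hjb : (j : ℕ) < b <;> by_cases hja : (j : ℕ) < a <;>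
      simp only [hjb, hja, if_true, if_false, Fin.val_castSucc, Fin.val_succ] <;>
      split_ifs <;>
      first | contradiction | omega | congr 1

/-- if `x` contains a block of zeros of length 5 starting at `p` and a block of
zeros of length 1 starting at `q`, and `x'` is obtained from `x` by deleting one zero from the
first block and inserting one extra zero into the second, then for every binary string `y` of
length `n`, `|L(x', y) - L(x, y)| ≤ 1`. -/
theorem score_changes_by_at_most_one (S : ℝ) (hS : 0 < S) (n : ℕ)
    (x y : Fin n → Bool) (p q : ℕ)
    (hp : blockStart x 5 p) (hq : blockStart x 1 q) :
    |optScore S n (modifyStr x p q) y - optScore S n x y| ≤ 1 := by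
  obtain ⟨-, hpn, hp0, -⟩ := hp
  obtain ⟨-, hqn, -⟩ := hq
  cases n with
  | zero => omega
  | succ m =>
    have hpa : x ⟨p, by omega⟩ = false := by
      have := hp0 p (by simp)
      rwa [_root_.ext, dif_pos (by omega)] at this
    obtain ⟨hb, h⟩ := modifyStr_spec x ⟨p, by omega⟩ q
      ⟨if p < q then q - 1 else q, by split_ifs <;> omega⟩ rfl
    rw [abs_le]
    constructor
    · linarith [optScore_le_add_one hS y h hpa]
    · linarith [optScore_le_add_one hS y (fun j => (h j).symm) hb]
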